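/- Let E be a unital idempotent CPTP map on d×d complex matrices, let a ∈ (0,1)∪(1,2], let ρ be a positive definite density matrix, and set N = Tr((E(ρ^a))^{1/a}) and σ* = (E(ρ^a))^{1/a}/N. Then σ* is a positive definite density matrix, E(σ*) = σ*, and S̃_a(ρ|σ*) = (N − 1)/(a − 1). -/

import Mathlib

open Matrix
open scoped ComplexOrder

/-- Matrix power `A ^ t` for real `t`, via the continuous functional calculus
(applying `x ↦ x ^ t` to the eigenvalues of a Hermitian matrix `A`). -/
noncomputable def mpow {d : ℕ} (A : Matrix (Fin d) (Fin d) ℂ) (t : ℝ) :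
    Matrix (Fin d) (Fin d) ℂ :=
  cfc (fun x : ℝ => x ^ t) A

/-- The Tsallis-based relative entropy
`S̃_a(ρ|σ) = ((Tr (ρ^a σ^(1-a)))^(1/a) - 1) / (a - 1)`. -/
noncomputable def tsallis {d : ℕ} (a : ℝ) (ρ σ : Matrix (Fin d) (Fin d) ℂ) : ℝ :=
  ((((mpow ρ a * mpow σ (1 - a)).trace).re) ^ (1 / a) - 1) / (a - 1)

/-!
Write `E X = ∑ i, Kᵢ X Kᵢᴴ`. A fixed point `X` of `E` commutes with every `Kᵢ`, because `Xᴴ` is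
fixed too, so that `∑ i, tr ([Kᵢ, X] [Kᵢ, X]ᴴ) = tr (E (X Xᴴ)) - tr (X Xᴴ) = 0`. Hence
`E (Y * X ^ t) = E Y * X ^ t` for positive definite fixed points `X`. With `X = E (ρ ^ a)` and
`Y = 1` this shows that `σ*` is fixed; with `X = σ*` and `Y = ρ ^ a` it gives
`tr (ρ ^ a σ* ^ (1 - a)) = tr (E (ρ ^ a) σ* ^ (1 - a)) = N ^ a tr (σ* ^ a σ* ^ (1 - a)) = N ^ a`.
-/

section Rpow

variable {A : Type*} [Ring A] [StarRing A] [TopologicalSpace A] [IsSemitopologicalRing A]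
  [T2Space A] [PartialOrder A] [StarOrderedRing A] [Algebra ℝ A]
  [ContinuousFunctionalCalculus ℝ A IsSelfAdjoint] [NonnegSpectrumClass ℝ A]

lemma smul_rpow {x : A} (hx : IsStrictlyPositive x) {c : ℝ} (hc : 0 < c) (t : ℝ) :
    (c • x) ^ t = c ^ t • x ^ t := by
  have hpow : ContinuousOn (fun r : ℝ => r ^ t) (spectrum ℝ x) :=
    continuousOn_id.rpow_const fun r hr => Or.inl (hx.spectrum_pos hr).ne'
  calc (c • x) ^ t = cfc (fun r : ℝ => c * r) x ^ t := by rw [cfc_const_mul_id c x]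
    _ = cfc (fun r : ℝ => (c * r) ^ t) x :=
        CFC.cfc_rpow fun r hr => mul_pos hc (hx.spectrum_pos hr)
    _ = cfc (fun r : ℝ => c ^ t * r ^ t) x :=
        cfc_congr fun r hr => Real.mul_rpow hc.le (hx.spectrum_pos hr).le
    _ = c ^ t • x ^ t := by rw [cfc_const_mul _ _ x hpow, CFC.rpow_eq_cfc_real hx.nonneg]

end Rpow

section KrausMap

variable {ι m n R : Type*} [Fintype ι] [Fintype n]

section Algebraic

variable [CommSemiring R] [StarRing R]

/-- The completely positive map `X ↦ ∑ i, K i * X * (K i)ᴴ` with Kraus operators `K i`. -/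
def krausMap (K : ι → Matrix m n R) : Matrix n n R →ₗ[R] Matrix m m R where
  toFun X := ∑ i, K i * X * (K i)ᴴ
  map_add' X Y := by simp only [Matrix.mul_add, Matrix.add_mul, Finset.sum_add_distrib]
  map_smul' c X := by
    simp only [Matrix.mul_smul, Matrix.smul_mul, Finset.smul_sum, RingHom.id_apply]

lemma krausMap_apply (K : ι → Matrix m n R) (X : Matrix n n R) :
    krausMap K X = ∑ i, K i * X * (K i)ᴴ := rfl

lemma krausMap_conjTranspose (K : ι → Matrix m n R) (X : Matrix n n R) :
    krausMap K Xᴴ = (krausMap K X)ᴴ := by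
  simp only [krausMap_apply, conjTranspose_sum, conjTranspose_mul, conjTranspose_conjTranspose,
    Matrix.mul_assoc]

lemma trace_krausMap [Fintype m] [DecidableEq n] {K : ι → Matrix m n R}
    (hK : ∑ i, (K i)ᴴ * K i = 1) (X : Matrix n n R) : (krausMap K X).trace = X.trace := by
  calc (krausMap K X).trace = ∑ i, ((K i)ᴴ * K i * X).trace := by
        simp only [krausMap_apply, trace_sum, trace_mul_cycle (K _) X]
    _ = X.trace := by rw [← trace_sum, ← Finset.sum_mul, hK, one_mul]

lemma krausMap_mul_of_commute {K : ι → Matrix n n R} {Z : Matrix n n R}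
    (hZ : ∀ i, Commute (K i)ᴴ Z) (Y : Matrix n n R) :
    krausMap K (Y * Z) = krausMap K Y * Z := by
  simp only [krausMap_apply, Finset.sum_mul, Matrix.mul_assoc, (hZ _).eq]

lemma dotProduct_krausMap_mulVec [Fintype m] (K : ι → Matrix m n R) (A : Matrix n n R)
    (x : m → R) :
    star x ⬝ᵥ (krausMap K A *ᵥ x) = ∑ i, star ((K i)ᴴ *ᵥ x) ⬝ᵥ (A *ᵥ ((K i)ᴴ *ᵥ x)) := by
  simp only [krausMap_apply, sum_mulVec, dotProduct_sum, star_mulVec, conjTranspose_conjTranspose,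
    dotProduct_mulVec, vecMul_vecMul, Matrix.mul_assoc]

end Algebraic

section Positivity

variable [CommRing R] [StarRing R] [PartialOrder R] [StarOrderedRing R]

lemma krausMap_posDef [Finite m] [DecidableEq n] {K : ι → Matrix m n R}
    (hK : (krausMap K 1).PosDef) {A : Matrix n n R} (hA : A.PosDef) :
    (krausMap K A).PosDef := by
  have := Fintype.ofFinite m
  refine .of_dotProduct_mulVec_pos ?_ fun x hx => ?_
  · rw [IsHermitian, ← krausMap_conjTranspose, hA.isHermitian.eq]
  · obtain ⟨i, hi⟩ : ∃ i, (K i)ᴴ *ᵥ x ≠ 0 := by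
      by_contra! hzero
      have hpos := hK.dotProduct_mulVec_pos hx
      simp [dotProduct_krausMap_mulVec, hzero] at hpos
    rw [dotProduct_krausMap_mulVec]
    exact Finset.sum_pos' (fun j _ => hA.posSemidef.dotProduct_mulVec_nonneg _)
      ⟨i, Finset.mem_univ i, hA.dotProduct_mulVec_pos hi⟩

end Positivity

section FixedPoints

variable [DecidableEq n]

lemma sum_commutator_mul_conjTranspose [CommRing R] [StarRing R] (K : ι → Matrix n n R)
    (X : Matrix n n R) :
    ∑ i, ⁅K i, X⁆ * ⁅K i, X⁆ᴴ =
      krausMap K (X * Xᴴ) - krausMap K X * Xᴴ - X * krausMap K Xᴴ + X * krausMap K 1 * Xᴴ := by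
  simp only [krausMap_apply, Finset.sum_mul, Finset.mul_sum, ← Finset.sum_sub_distrib,
    ← Finset.sum_add_distrib, Ring.lie_def, conjTranspose_sub, conjTranspose_mul]
  exact Finset.sum_congr rfl fun i _ => by noncomm_ring

variable [CommRing R] [StarRing R] [PartialOrder R] [StarOrderedRing R] [NoZeroDivisors R]

lemma commute_of_krausMap_eq_self {K : ι → Matrix n n R} (hTP : ∑ i, (K i)ᴴ * K i = 1)
    (hUnital : krausMap K 1 = 1) {X : Matrix n n R} (hX : krausMap K X = X) (i : ι) :
    Commute (K i) X := by
  have hsum : ∑ i, (⁅K i, X⁆ * ⁅K i, X⁆ᴴ).trace = 0 := by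
    rw [← trace_sum, sum_commutator_mul_conjTranspose, krausMap_conjTranspose, hX, hUnital]
    simp [trace_krausMap hTP]
  have hzero := (Finset.sum_eq_zero_iff_of_nonneg fun i _ =>
    (posSemidef_self_mul_conjTranspose ⁅K i, X⁆).trace_nonneg).mp hsum i (Finset.mem_univ i)
  exact commute_iff_lie_eq.mpr (trace_mul_conjTranspose_self_eq_zero_iff.mp hzero)

end FixedPoints

end KrausMap

section FixedPointPowers

open scoped MatrixOrder

variable {ι n 𝕜 : Type*} [Fintype ι] [Fintype n] [DecidableEq n] [RCLike 𝕜]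
  {K : ι → Matrix n n 𝕜} {X : Matrix n n 𝕜}

lemma krausMap_mul_rpow (hTP : ∑ i, (K i)ᴴ * K i = 1) (hUnital : krausMap K 1 = 1)
    (hX : X.IsHermitian) (hfix : krausMap K X = X) (Y : Matrix n n 𝕜) (t : ℝ) :
    krausMap K (Y * X ^ t) = krausMap K Y * X ^ t := by
  refine krausMap_mul_of_commute (fun i => ?_) Y
  have hcomm : Commute X (K i)ᴴ := by
    simpa only [star_eq_conjTranspose, hX.eq] using
      (commute_of_krausMap_eq_self hTP hUnital hfix i).symm.star_star
  exact (hcomm.cfc_nnreal _).symm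

lemma krausMap_rpow (hTP : ∑ i, (K i)ᴴ * K i = 1) (hUnital : krausMap K 1 = 1)
    (hX : X.IsHermitian) (hfix : krausMap K X = X) (t : ℝ) : krausMap K (X ^ t) = X ^ t := by
  simpa only [one_mul, hUnital] using krausMap_mul_rpow hTP hUnital hX hfix 1 t

lemma trace_mul_rpow_one_sub (hTP : ∑ i, (K i)ᴴ * K i = 1) (hUnital : krausMap K 1 = 1)
    (hX : X.PosDef) (hfix : krausMap K X = X) {A : Matrix n n 𝕜} {c a : ℝ}
    (hA : krausMap K A = c • X ^ a) : (A * X ^ (1 - a)).trace = c • X.trace := by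
  calc (A * X ^ (1 - a)).trace = (krausMap K A * X ^ (1 - a)).trace := by
        rw [← krausMap_mul_rpow hTP hUnital hX.isHermitian hfix, trace_krausMap hTP]
    _ = c • (X ^ a * X ^ (1 - a)).trace := by rw [hA, smul_mul_assoc, trace_smul]
    _ = c • X.trace := by
        rw [← CFC.rpow_add hX.isUnit, add_sub_cancel, CFC.rpow_one X hX.posSemidef.nonneg]

end FixedPointPowers

section Tsallis

open scoped MatrixOrder

variable {d : ℕ}

lemma mpow_eq_rpow {A : Matrix (Fin d) (Fin d) ℂ} (hA : A.PosSemidef) (t : ℝ) :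
    mpow A t = A ^ t :=
  (CFC.rpow_eq_cfc_real hA.nonneg).symm

lemma tsallis_of_trace_eq_rpow {ρ σ : Matrix (Fin d) (Fin d) ℂ} (hρ : ρ.PosSemidef)
    (hσ : σ.PosSemidef) {a N : ℝ} (ha : a ≠ 0) (hN : 0 ≤ N)
    (htrace : (ρ ^ a * σ ^ (1 - a)).trace = (N ^ a : ℝ)) :
    tsallis a ρ σ = (N - 1) / (a - 1) := by
  rw [tsallis, mpow_eq_rpow hρ, mpow_eq_rpow hσ, htrace, Complex.ofReal_re, one_div,
    Real.rpow_rpow_inv hN ha]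

theorem stmt_1_general [NeZero d]
    (E : Matrix (Fin d) (Fin d) ℂ →ₗ[ℂ] Matrix (Fin d) (Fin d) ℂ)
    (hKraus : ∃ (n : ℕ) (K : Fin n → Matrix (Fin d) (Fin d) ℂ),
      (∀ X, E X = ∑ i, K i * X * (K i)ᴴ) ∧ ∑ i, (K i)ᴴ * K i = 1)
    (hUnital : E 1 = 1)
    (hIdem : ∀ X, E (E X) = E X)
    (a : ℝ) (ha : a ≠ 0 ∧ a ≠ 1)
    (ρ : Matrix (Fin d) (Fin d) ℂ) (hρ : ρ.PosDef)
    (N : ℝ) (hN : N = ((mpow (E (mpow ρ a)) (1 / a)).trace).re)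
    (σstar : Matrix (Fin d) (Fin d) ℂ)
    (hσstar : σstar = ((N : ℂ))⁻¹ • mpow (E (mpow ρ a)) (1 / a)) :
    σstar.PosDef ∧ σstar.trace = 1 ∧ E σstar = σstar ∧
    tsallis a ρ σstar = (N - 1) / (a - 1) := by
  obtain ⟨n, K, hE, hTP⟩ := hKraus
  obtain rfl : E = krausMap K := LinearMap.ext hE
  rw [mpow_eq_rpow hρ.posSemidef] at hN hσstar
  generalize hXdef : krausMap K (ρ ^ a) = X at hN hσstar
  have hXfix : krausMap K X = X := by rw [← hXdef, hIdem]
  have hX : X.PosDef := by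
    rw [← hXdef]
    exact krausMap_posDef (by rw [hUnital]; exact .one) (hρ.isStrictlyPositive.rpow ρ a).posDef
  rw [mpow_eq_rpow hX.posSemidef, one_div] at hN hσstar
  have hP : (X ^ a⁻¹).PosDef := (hX.isStrictlyPositive.rpow X a⁻¹).posDef
  have htrace : (X ^ a⁻¹).trace = N := by
    rw [hN]
    exact Complex.eq_re_of_ofReal_le (r := 0) (by simpa using hP.trace_pos.le)
  have hNpos : 0 < N := by simpa [htrace] using hP.trace_pos
  have hNσ : N • σstar = X ^ a⁻¹ := by
    rw [hσstar, ← Complex.coe_smul, smul_inv_smul₀ (mod_cast hNpos.ne')]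
  have hσ : σstar.PosDef := hσstar ▸ hP.smul (mod_cast inv_pos.mpr hNpos)
  have hσtrace : σstar.trace = 1 := by
    rw [hσstar, trace_smul, htrace, smul_eq_mul, inv_mul_cancel₀ (mod_cast hNpos.ne')]
  have hσfix : krausMap K σstar = σstar := by
    rw [hσstar, map_smul, krausMap_rpow hTP hUnital hX.isHermitian hXfix]
  have hXσ : X = N ^ a • σstar ^ a := by
    rw [← smul_rpow hσ.isStrictlyPositive hNpos, hNσ,
      CFC.rpow_inv_rpow X a ha.1 hX.isStrictlyPositive]
  have hρσ : (ρ ^ a * σstar ^ (1 - a)).trace = (N ^ a : ℝ) := by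
    rw [trace_mul_rpow_one_sub hTP hUnital hσ hσfix (hXdef.trans hXσ), hσtrace,
      Complex.real_smul, mul_one]
  exact ⟨hσ, hσtrace, hσfix,
    tsallis_of_trace_eq_rpow hρ.posSemidef hσ.posSemidef ha.1 hNpos.le hρσ⟩

end Tsallis

/-- For a unital idempotent CPTP map `E`, `a ∈ (0,1) ∪ (1,2]`, a positive definite
density matrix `ρ`, `N = Tr((E(ρ^a))^(1/a))` and `σ* = (E(ρ^a))^(1/a)/N`:
`σ*` is a positive definite density matrix, fixed by `E`, with
`S̃_a(ρ|σ*) = (N - 1)/(a - 1)`. -/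
theorem stmt_1 {d : ℕ}
    (E : Matrix (Fin d) (Fin d) ℂ →ₗ[ℂ] Matrix (Fin d) (Fin d) ℂ)
    (hKraus : ∃ (n : ℕ) (K : Fin n → Matrix (Fin d) (Fin d) ℂ),
      (∀ X, E X = ∑ i, K i * X * (K i)ᴴ) ∧ ∑ i, (K i)ᴴ * K i = 1)
    (hUnital : E 1 = 1)
    (hIdem : ∀ X, E (E X) = E X)
    (a : ℝ) (ha : a ∈ Set.Ioo (0 : ℝ) 1 ∪ Set.Ioc (1 : ℝ) 2)
    (ρ : Matrix (Fin d) (Fin d) ℂ) (hρ : ρ.PosDef) (hρtr : ρ.trace = 1)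
    (N : ℝ) (hN : N = ((mpow (E (mpow ρ a)) (1 / a)).trace).re)
    (σstar : Matrix (Fin d) (Fin d) ℂ)
    (hσstar : σstar = ((N : ℂ))⁻¹ • mpow (E (mpow ρ a)) (1 / a)) :
    σstar.PosDef ∧ σstar.trace = 1 ∧ E σstar = σstar ∧
    tsallis a ρ σstar = (N - 1) / (a - 1) := by
  have : NeZero d := ⟨by rintro rfl; simp at hρtr⟩
  exact stmt_1_general E hKraus hUnital hIdem a (by grind) ρ hρ N hN σstar hσstar
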